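/- Let u₁, …, u_k ∈ F₂ and let L = max_{1 ≤ i ≤ k} |u_i|. Suppose that φ is a chain of type (C1) with |φ| ≥ 4L+5 such that ‖φ(u_i)‖ = ‖u_i‖ for every i = 1, …, k. Then there exists a chain ψ of type (C1) with |ψ| < |φ| such that ψ(u_i) is conjugate in F₂ to φ(u_i) for every i = 1, …, k. -/

import Mathlib

noncomputable section

/-- The free group of rank two. -/
abbrev F : Type := FreeGroup (Fin 2)

/-- The generator `a`. -/
def ga : F := FreeGroup.of 0

/-- The generator `b`. -/
def gb : F := FreeGroup.of 1

/-- Build an automorphism of `F` from images of the generators together with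
an explicit inverse. -/
def mkAut (x y xi yi : F)
    (h1 : FreeGroup.lift ![xi, yi] x = ga)
    (h2 : FreeGroup.lift ![xi, yi] y = gb)
    (h3 : FreeGroup.lift ![x, y] xi = ga)
    (h4 : FreeGroup.lift ![x, y] yi = gb) : MulAut F :=
  MonoidHom.toMulEquiv (FreeGroup.lift ![x, y]) (FreeGroup.lift ![xi, yi])
    (by
      ext i
      fin_cases i
      · simpa [ga] using h1
      · simpa [gb] using h2)
    (by
      ext i
      fin_cases i
      · simpa [ga] using h3
      · simpa [gb] using h4)

/-- `σ : a ↦ ab, b ↦ b`. -/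
def σ : MulAut F :=
  mkAut (ga * gb) gb (ga * gb⁻¹) gb
    (by simp [ga, gb]) (by simp [ga, gb]) (by simp [ga, gb]) (by simp [ga, gb])

/-- `τ : a ↦ a, b ↦ ba`. -/
def τ : MulAut F :=
  mkAut ga (gb * ga) ga (gb * ga⁻¹)
    (by simp [ga, gb]) (by simp [ga, gb]) (by simp [ga, gb]) (by simp [ga, gb])

/-- `δ₁ : a ↦ b⁻¹ab, b ↦ b`. -/
def δ₁ : MulAut F :=
  mkAut (gb⁻¹ * ga * gb) gb (gb * ga * gb⁻¹) gb
    (by simp [ga, gb, mul_assoc]) (by simp [ga, gb]) (by simp [ga, gb, mul_assoc]) (by simp [ga, gb])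

/-- `δ₂ : a ↦ bab⁻¹, b ↦ b`. -/
def δ₂ : MulAut F :=
  mkAut (gb * ga * gb⁻¹) gb (gb⁻¹ * ga * gb) gb
    (by simp [ga, gb, mul_assoc]) (by simp [ga, gb]) (by simp [ga, gb, mul_assoc]) (by simp [ga, gb])

/-- `δ₃ : a ↦ a, b ↦ a⁻¹ba`. -/
def δ₃ : MulAut F :=
  mkAut ga (ga⁻¹ * gb * ga) ga (ga * gb * ga⁻¹)
    (by simp [ga, gb]) (by simp [ga, gb, mul_assoc]) (by simp [ga, gb]) (by simp [ga, gb, mul_assoc])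

/-- `δ₄ : a ↦ a, b ↦ aba⁻¹`. -/
def δ₄ : MulAut F :=
  mkAut ga (ga * gb * ga⁻¹) ga (ga⁻¹ * gb * ga)
    (by simp [ga, gb]) (by simp [ga, gb, mul_assoc]) (by simp [ga, gb]) (by simp [ga, gb, mul_assoc])

/-- `π : a ↦ b, b ↦ a⁻¹`. -/
def pi' : MulAut F :=
  mkAut gb ga⁻¹ gb⁻¹ ga
    (by simp [ga, gb]) (by simp [ga, gb]) (by simp [ga, gb]) (by simp [ga, gb])

/-- Word length of (the reduced word representing) an element of `F`. -/
def len (w : F) : ℕ := w.toWord.length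

/-- Cyclic length: minimal word length among all conjugates. -/
def cyclen (w : F) : ℕ := sInf {n | ∃ g : F, len (g * w * g⁻¹) = n}

/-- The chain `τ^{m_k}σ^{l_k}⋯τ^{m_1}σ^{l_1}` of type (C1) determined by the list
`[(l_k, m_k), …, (l_1, m_1)]` of pairs of exponents. -/
def chainC1 (c : List (ℕ × ℕ)) : MulAut F :=
  (c.map fun p => τ ^ p.2 * σ ^ p.1).prod

/-- The chain `τ^{-m_k}σ^{-l_k}⋯τ^{-m_1}σ^{-l_1}` of type (C2) determined by the list
`[(l_k, m_k), …, (l_1, m_1)]` of pairs of exponents. -/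
def chainC2 (c : List (ℕ × ℕ)) : MulAut F :=
  (c.map fun p => (τ ^ p.2)⁻¹ * (σ ^ p.1)⁻¹).prod

/-- Number of factors of `σ` in a chain. -/
def sigmaCount (c : List (ℕ × ℕ)) : ℕ := (c.map Prod.fst).sum

/-- Number of factors of `τ` in a chain. -/
def tauCount (c : List (ℕ × ℕ)) : ℕ := (c.map Prod.snd).sum

/-- The length `Σ (l_i + m_i)` of a chain. -/
def chainLen (c : List (ℕ × ℕ)) : ℕ := sigmaCount c + tauCount c

/-- A Whitehead automorphism of type (W1): it permutes `{a, a⁻¹, b, b⁻¹}`. -/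
def IsW1 (β : MulAut F) : Prop :=
  β ga ∈ ({ga, ga⁻¹, gb, gb⁻¹} : Set F) ∧ β gb ∈ ({ga, ga⁻¹, gb, gb⁻¹} : Set F)

/-- A chain of type (C1). -/
def IsC1 (φ : MulAut F) : Prop := ∃ c : List (ℕ × ℕ), c ≠ [] ∧ φ = chainC1 c

/-- A chain of type (C2). -/
def IsC2 (φ : MulAut F) : Prop := ∃ c : List (ℕ × ℕ), c ≠ [] ∧ φ = chainC2 c

/-- A positive element: a product of the generators `a` and `b`. -/
def IsPositive (w : F) : Prop := w ∈ Submonoid.closure ({ga, gb} : Set F)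

/-- The four automorphisms `δ₁, δ₂, δ₃, δ₄`. -/
def δIdx : Fin 4 → MulAut F := ![δ₁, δ₂, δ₃, δ₄]


abbrev Lt : Type := Fin 2 × Bool

/-! ### Generic cyclic pair sums -/

section generic
variable {α β : Type}

def hd : List α → α → α
  | [], e => e
  | x :: _, _ => x

theorem hd_cons (x : α) (s : List α) (e : α) : hd (x :: s) e = x := rfl

theorem hd_nil (e : α) : hd [] e = e := rfl

def psum (g : α → α → ℤ) : List α → α → ℤ
  | [], _ => 0
  | x :: t, e => g x (hd t e) + psum g t e

def pall (R : α → α → Prop) : List α → α → Prop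
  | [], _ => True
  | x :: t, e => R x (hd t e) ∧ pall R t e

theorem hd_append (s t : List α) (e : α) : hd (s ++ t) e = hd s (hd t e) := by
  cases s <;> rfl

theorem hd_map (f : α → β) (s : List α) (e : α) : hd (s.map f) (f e) = f (hd s e) := by
  cases s <;> rfl

theorem hd_hd (s : List α) (e : α) : hd s (hd s e) = hd s e := by
  cases s <;> rfl

theorem hd_congr (s : List α) (h : s ≠ []) (e e' : α) : hd s e = hd s e' := by
  cases s
  · exact absurd rfl h
  · rfl

theorem psum_append (g : α → α → ℤ) (s t : List α) (e : α) :
    psum g (s ++ t) e = psum g s (hd t e) + psum g t e := by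
  induction s with
  | nil => simp [psum]
  | cons x s ih => simp only [List.cons_append, psum, ih, hd_append]; ring

theorem pall_append (R : α → α → Prop) (s t : List α) (e : α) :
    pall R (s ++ t) e ↔ pall R s (hd t e) ∧ pall R t e := by
  induction s with
  | nil => simp [pall]
  | cons x s ih => simp only [List.cons_append, pall, ih, hd_append]; tauto

theorem psum_rot (g : α → α → ℤ) (s t : List α) (e : α) :
    psum g (s ++ t) (hd (s ++ t) e) = psum g (t ++ s) (hd (t ++ s) e) := by
  rcases s with _ | ⟨x, s⟩
  · simp
  rcases t with _ | ⟨y, t⟩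
  · simp
  rw [psum_append, psum_append]
  simp only [List.cons_append, hd]
  ring

theorem pall_rot (R : α → α → Prop) (s t : List α) (e : α) :
    pall R (s ++ t) (hd (s ++ t) e) ↔ pall R (t ++ s) (hd (t ++ s) e) := by
  rcases s with _ | ⟨x, s⟩
  · simp
  rcases t with _ | ⟨y, t⟩
  · simp
  rw [pall_append, pall_append]
  simp only [List.cons_append, hd]
  tauto

theorem psum_map (f : α → β) (g : β → β → ℤ) (s : List α) (e : α) :
    psum g (s.map f) (f e) = psum (fun x y => g (f x) (f y)) s e := by
  induction s with
  | nil => rfl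
  | cons x s ih => simp only [List.map_cons, psum, ih, hd_map]

theorem pall_map (f : α → β) (R : β → β → Prop) (s : List α) (e : α) :
    pall R (s.map f) (f e) ↔ pall (fun x y => R (f x) (f y)) s e := by
  induction s with
  | nil => rfl
  | cons x s ih => simp only [List.map_cons, pall, ih, hd_map]

theorem pall_mono {R S : α → α → Prop} (h : ∀ x y, R x y → S x y) {s : List α} {e : α}
    (hs : pall R s e) : pall S s e := by
  induction s with
  | nil => trivial
  | cons x s ih => exact ⟨h _ _ hs.1, ih hs.2⟩

theorem pall_and {R S : α → α → Prop} {s : List α} {e : α}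
    (hs : pall R s e) (hs' : pall S s e) : pall (fun x y => R x y ∧ S x y) s e := by
  induction s with
  | nil => trivial
  | cons x s ih => exact ⟨⟨hs.1, hs'.1⟩, ih hs.2 hs'.2⟩

theorem pall_of_forall {R : α → α → Prop} (h : ∀ x y, R x y) (s : List α) (e : α) :
    pall R s e := by
  induction s with
  | nil => trivial
  | cons x s ih => exact ⟨h _ _, ih⟩

theorem psum_le {g g' : α → α → ℤ} {s : List α} {e : α}
    (h : pall (fun x y => g x y ≤ g' x y) s e) : psum g s e ≤ psum g' s e := by
  induction s with
  | nil => exact le_refl _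
  | cons x s ih => exact add_le_add h.1 (ih h.2)

theorem psum_congr {g g' : α → α → ℤ} {s : List α} {e : α}
    (h : pall (fun x y => g x y = g' x y) s e) : psum g s e = psum g' s e := by
  induction s with
  | nil => rfl
  | cons x s ih => simp only [psum]; rw [h.1, ih h.2]

theorem psum_eq {g g' : α → α → ℤ} {s : List α} {e : α}
    (h : pall (fun x y => g x y ≤ g' x y) s e) (h' : psum g' s e ≤ psum g s e) :
    pall (fun x y => g x y = g' x y) s e := by
  induction s with
  | nil => trivial
  | cons x s ih =>
    have h1 := psum_le h.2
    have h2 := h.1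
    simp only [psum] at h'
    exact ⟨by linarith, ih h.2 (by linarith)⟩

theorem psum_add (g g' : α → α → ℤ) (s : List α) (e : α) :
    psum (fun x y => g x y + g' x y) s e = psum g s e + psum g' s e := by
  induction s with
  | nil => rfl
  | cons x s ih => simp only [psum, ih]; ring

theorem psum_tele (t : α → ℤ) (s : List α) (e : α) :
    psum (fun x y => t x - t y) s e = t (hd s e) - t e := by
  induction s with
  | nil => simp [psum, hd]
  | cons x s ih => simp only [psum, ih, hd]; ring

theorem psum_const (s : List α) (e : α) : psum (fun _ _ => 1) s e = s.length := by
  induction s with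
  | nil => rfl
  | cons x s ih => simp only [psum, ih, List.length_cons]; push_cast; ring

theorem psum_replicate (g : α → α → ℤ) (n : ℕ) (x e : α) :
    psum g (List.replicate (n + 1) x) e = n * g x x + g x e := by
  induction n with
  | zero => simp [psum, hd]
  | succ n ih =>
    rw [List.replicate_succ]
    simp only [psum, ih]
    rw [List.replicate_succ]
    simp only [hd]; push_cast; ring

theorem pall_iff_isChain (R : α → α → Prop) (s : List α) (e : α) :
    pall R s e ↔ List.IsChain R (s ++ [e]) := by
  induction s with
  | nil => simp [pall]
  | cons x s ih =>
    cases s with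
    | nil => simp [pall, hd]
    | cons y s => simp only [pall, hd, List.cons_append, List.isChain_cons_cons] at ih ⊢; rw [ih]

end generic

/-! ### Cyclic length -/

def Rd (x y : Lt) : Prop := x.1 = y.1 → x.2 = y.2

instance : DecidableRel Rd := fun x y => by unfold Rd; infer_instance

/-- cyclic pair sum -/
def cps (g : Lt → Lt → ℤ) (w : List Lt) : ℤ := psum g w (hd w (0, true))
def cpa (R : Lt → Lt → Prop) (w : List Lt) : Prop := pall R w (hd w (0, true))

theorem cpa_iff (w : List Lt) : cpa Rd w ↔ FreeGroup.IsCyclicallyReduced w := by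
  rw [cpa, pall_iff_isChain, FreeGroup.isCyclicallyReduced_iff, FreeGroup.IsReduced,
    List.isChain_append]
  cases w with
  | nil => simp
  | cons x w =>
    have e : (fun a b : Lt => a.1 = b.1 → a.2 = b.2) = Rd := rfl
    rw [e]
    refine and_congr_right fun _ => ?_
    simp only [hd, List.isChain_singleton, true_and, List.head?_cons, Option.mem_def,
      Option.some.injEq, forall_eq']
    rfl

theorem cyclen_le (w g : F) : cyclen w ≤ len (g * w * g⁻¹) := Nat.sInf_le ⟨g, rfl⟩

theorem cyclen_conj {v w : F} (h : IsConj v w) : cyclen v = cyclen w := by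
  obtain ⟨c, hc⟩ := isConj_iff.1 h
  have : {n | ∃ g : F, len (g * v * g⁻¹) = n} = {n | ∃ g : F, len (g * w * g⁻¹) = n} := by
    ext n
    constructor
    · rintro ⟨g, hg⟩
      refine ⟨g * c⁻¹, ?_⟩
      rw [← hg, ← hc]; congr 1; group
    · rintro ⟨g, hg⟩
      refine ⟨g * c, ?_⟩
      rw [← hg, ← hc]; congr 1; group
  unfold cyclen
  rw [this]

theorem fnorm_pow_le (x : F) (n : ℕ) : (x ^ n).norm ≤ n * x.norm := by
  induction n with
  | zero => simp
  | succ n ih =>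
    rw [pow_succ]
    refine (FreeGroup.norm_mul_le _ _).trans ?_
    rw [Nat.succ_mul]; omega

theorem cyclen_mk {w : List Lt} (h : FreeGroup.IsCyclicallyReduced w) :
    cyclen (FreeGroup.mk w) = w.length := by
  apply le_antisymm
  · refine (cyclen_le _ 1).trans ?_
    simp only [one_mul, inv_one, mul_one]
    exact FreeGroup.norm_mk_le
  · obtain ⟨g, hg⟩ : ∃ g : F, len (g * FreeGroup.mk w * g⁻¹) = cyclen (FreeGroup.mk w) :=
      Nat.sInf_mem (s := {n | ∃ g : F, len (g * FreeGroup.mk w * g⁻¹) = n}) ⟨_, 1, rfl⟩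
    rw [← hg]
    set x := FreeGroup.mk w with hx
    change w.length ≤ (g * x * g⁻¹).norm
    by_contra! hlt
    have h1 : ∀ n : ℕ, (x ^ n).norm = n * w.length := by
      intro n
      have : (x ^ n).toWord = (List.replicate n w).flatten := by
        rw [FreeGroup.toWord_pow, hx, FreeGroup.toWord_mk, h.isReduced.reduce_eq]
        exact (h.flatten_replicate n).isReduced.reduce_eq
      rw [FreeGroup.norm, this]; simp
    have h2 : ∀ n : ℕ, (x ^ n).norm ≤ 2 * g.norm + n * (g * x * g⁻¹).norm := by
      intro n
      have e : x ^ n = g⁻¹ * (g * x * g⁻¹) ^ n * g := by rw [conj_pow]; group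
      have a1 := FreeGroup.norm_mul_le (g⁻¹ * (g * x * g⁻¹) ^ n) g
      have a2 := FreeGroup.norm_mul_le (g⁻¹) ((g * x * g⁻¹) ^ n)
      rw [FreeGroup.norm_inv_eq] at a2
      have a3 := fnorm_pow_le (g * x * g⁻¹) n
      rw [← e] at a1
      omega
    have h3 := h2 (2 * g.norm + 1)
    rw [h1] at h3
    nlinarith

theorem exists_cr (v : F) : ∃ w : List Lt, cpa Rd w ∧ IsConj v (FreeGroup.mk w) := by
  refine ⟨FreeGroup.reduceCyclically v.toWord, ?_, ?_⟩
  · rw [cpa_iff]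
    exact FreeGroup.reduceCyclically.isCyclicallyReduced FreeGroup.isReduced_toWord
  · have := FreeGroup.reduceCyclically.conj_conjugator_reduceCyclically v.toWord
    have h2 := congrArg FreeGroup.mk this
    rw [← FreeGroup.mul_mk, ← FreeGroup.mul_mk, ← FreeGroup.inv_mk, FreeGroup.mk_toWord] at h2
    exact (isConj_iff.2 ⟨_, h2⟩).symm

theorem mk_rot (s t : List Lt) : IsConj (FreeGroup.mk (s ++ t)) (FreeGroup.mk (t ++ s)) := by
  rw [← FreeGroup.mul_mk, ← FreeGroup.mul_mk]
  exact isConj_iff.2 ⟨(FreeGroup.mk s)⁻¹, by group⟩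

/-! ### Syllable representation -/

def bl (k : ℤ) : List Lt := List.replicate k.natAbs (1, decide (0 ≤ k))

def seg (x : Bool × ℤ) : List Lt := (0, x.1) :: bl x.2

def EE : List (Bool × ℤ) → List Lt
  | [] => []
  | x :: r => seg x ++ EE r

def cc (ε ε' : Bool) : ℤ := if ε = ε' then (if ε then 1 else -1) else 0

def sh (i : ℤ) : List (Bool × ℤ) → Bool × ℤ → List (Bool × ℤ)
  | [], _ => []
  | x :: r, e => (x.1, x.2 + i * cc x.1 (hd r e).1) :: sh i r e

def lft {β : Type} (G : Bool → ℤ → Bool → β) (x y : Bool × ℤ) : β := G x.1 x.2 y.1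

theorem hd_sh (i : ℤ) (r : List (Bool × ℤ)) (e e' : Bool × ℤ) (h : e'.1 = e.1) (f : Bool × ℤ) :
    (hd (sh i r f) e').1 = (hd r e).1 := by
  cases r
  · exact h
  · rfl

theorem psum_sh (G : Bool → ℤ → Bool → ℤ) (i : ℤ) (r : List (Bool × ℤ)) (e e' : Bool × ℤ)
    (h : e'.1 = e.1) : psum (lft G) (sh i r e) e' =
      psum (lft fun ε k ε' => G ε (k + i * cc ε ε') ε') r e := by
  induction r with
  | nil => rfl
  | cons x r ih => simp only [sh, psum, ih, lft, hd_sh i r e e' h e]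

theorem pall_sh (G : Bool → ℤ → Bool → Prop) (i : ℤ) (r : List (Bool × ℤ)) (e e' : Bool × ℤ)
    (h : e'.1 = e.1) : pall (lft G) (sh i r e) e' ↔
      pall (lft fun ε k ε' => G ε (k + i * cc ε ε') ε') r e := by
  induction r with
  | nil => rfl
  | cons x r ih => simp only [sh, pall, ih, lft, hd_sh i r e e' h e]

theorem hd_EE (r : List (Bool × ℤ)) (e : Bool × ℤ) :
    hd (EE r) (0, e.1) = (0, (hd r e).1) := by
  cases r <;> rfl

theorem psum_EE (g : Lt → Lt → ℤ) (r : List (Bool × ℤ)) (e : Bool × ℤ) :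
    psum g (EE r) (0, e.1) = psum (lft fun ε k ε' => psum g (seg (ε, k)) (0, ε')) r e := by
  induction r with
  | nil => rfl
  | cons x r ih => simp only [EE, psum_append, ih, hd_EE]; rfl

theorem pall_EE (g : Lt → Lt → Prop) (r : List (Bool × ℤ)) (e : Bool × ℤ) :
    pall g (EE r) (0, e.1) ↔ pall (lft fun ε k ε' => pall g (seg (ε, k)) (0, ε')) r e := by
  induction r with
  | nil => rfl
  | cons x r ih => simp only [EE, pall_append, ih, hd_EE]; rfl

/-- cyclic end of a syllable list -/
def ce (r : List (Bool × ℤ)) : Bool × ℤ := hd r (true, 0)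

theorem cps_EE (g : Lt → Lt → ℤ) (r : List (Bool × ℤ)) :
    cps g (EE r) = psum (lft fun ε k ε' => psum g (seg (ε, k)) (0, ε')) r (ce r) := by
  rw [← psum_EE, cps, ce, ← hd_EE]

theorem cpa_EE (g : Lt → Lt → Prop) (r : List (Bool × ℤ)) :
    cpa g (EE r) ↔ pall (lft fun ε k ε' => pall g (seg (ε, k)) (0, ε')) r (ce r) := by
  rw [← pall_EE, cpa, ce, ← hd_EE]

theorem ce_sh (i : ℤ) (r : List (Bool × ℤ)) (f : Bool × ℤ) : (ce (sh i r f)).1 = (ce r).1 :=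
  hd_sh i r _ _ rfl f

theorem pall_replicate (R : Lt → Lt → Prop) (n : ℕ) (x e : Lt) :
    pall R (List.replicate (n + 1) x) e ↔ (n = 0 ∨ R x x) ∧ R x e := by
  induction n with
  | zero => simp [pall, hd]
  | succ n ih =>
    rw [List.replicate_succ]
    simp only [pall, ih]
    rw [List.replicate_succ]
    simp only [hd]
    simp
    tauto

theorem bl_cases (k : ℤ) : (k = 0 ∧ bl k = []) ∨
    ∃ n : ℕ, k.natAbs = n + 1 ∧ bl k = List.replicate (n + 1) (1, decide (0 ≤ k)) := by
  by_cases h : k = 0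
  · left; subst h; exact ⟨rfl, rfl⟩
  · right
    obtain ⟨n, hn⟩ : ∃ n, k.natAbs = n + 1 := ⟨k.natAbs - 1, by omega⟩
    exact ⟨n, hn, by rw [bl, hn]⟩

theorem seg_Rd (ε : Bool) (k : ℤ) (ε' : Bool) :
    pall Rd (seg (ε, k)) (0, ε') ↔ (k = 0 → ε = ε') := by
  rcases bl_cases k with ⟨h, h'⟩ | ⟨n, h, h'⟩
  · rw [seg, h']
    simp [pall, hd_nil, h, Rd]
  · simp only [seg, h', pall]
    rw [pall_replicate, List.replicate_succ]
    have : k ≠ 0 := by omega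
    simp [hd, Rd, this]

theorem seg_len (ε : Bool) (k : ℤ) : ((seg (ε, k)).length : ℤ) = 1 + |k| := by
  simp [seg, bl]; ring

theorem length_EE (r : List (Bool × ℤ)) :
    ((EE r).length : ℤ) = psum (lft fun _ k _ => 1 + |k|) r (ce r) := by
  rw [← psum_const _ (hd (EE r) (0, true)), ← cps, cps_EE]
  congr 1
  funext x y
  simp only [lft]
  rw [psum_const, seg_len]

/-- cyclically reduced syllable lists -/
def ok (r : List (Bool × ℤ)) : Prop := pall (lft fun ε k ε' => k = 0 → ε = ε') r (ce r)

theorem ok_iff (r : List (Bool × ℤ)) : ok r ↔ cpa Rd (EE r) := by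
  rw [cpa_EE, ok]; simp only [seg_Rd]

theorem ok_sh {r : List (Bool × ℤ)} (i : ℤ) (h : ok r) : ok (sh i r (ce r)) := by
  rw [ok, pall_sh _ _ _ _ _ (ce_sh i r _)]
  refine pall_mono ?_ h
  rintro ⟨ε, k⟩ ⟨ε', k'⟩
  simp only [lft, cc]
  intro h1 h2
  by_contra h3
  simp [h3] at h2
  exact h3 (h1 h2)

/-! ### action of σ -/

theorem σ_ga : σ ga = ga * gb := by
  simp [σ, mkAut, ga, gb]
theorem σ_gb : σ gb = gb := by
  simp [σ, mkAut, ga, gb]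
theorem τ_ga : τ ga = ga := by
  simp [τ, mkAut, ga, gb]
theorem τ_gb : τ gb = gb * ga := by
  simp [τ, mkAut, ga, gb]

theorem σi_gb : σ⁻¹ gb = gb := by
  rw [MulAut.inv_apply, MulEquiv.symm_apply_eq, σ_gb]
theorem σi_ga : σ⁻¹ ga = ga * gb⁻¹ := by
  rw [MulAut.inv_apply, MulEquiv.symm_apply_eq, map_mul, map_inv, σ_gb, σ_ga]; group

theorem σz_gb (i : ℤ) : (σ ^ i) gb = gb := by
  induction i with
  | zero => rfl
  | succ n ih => rw [zpow_add_one, MulAut.mul_apply, σ_gb, ih]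
  | pred n ih => rw [zpow_sub_one, MulAut.mul_apply, σi_gb, ih]

theorem σz_ga (i : ℤ) : (σ ^ i) ga = ga * gb ^ i := by
  induction i with
  | zero => simp
  | succ n ih => rw [zpow_add_one, MulAut.mul_apply, σ_ga, map_mul, ih, σz_gb]; group
  | pred n ih => rw [zpow_sub_one, MulAut.mul_apply, σi_ga, map_mul, map_inv, ih, σz_gb]; group

theorem mk_replicate (x : Lt) (n : ℕ) :
    FreeGroup.mk (List.replicate n x) = (FreeGroup.mk [x] : F) ^ n := by
  induction n with
  | zero => rfl
  | succ n ih => rw [List.replicate_succ', ← FreeGroup.mul_mk, ih, pow_succ]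

theorem mk_bl (k : ℤ) : FreeGroup.mk (bl k) = gb ^ k := by
  rw [bl, mk_replicate]
  have h1 : (FreeGroup.mk [((1 : Fin 2), true)] : F) = gb := rfl
  have h2 : (FreeGroup.mk [((1 : Fin 2), false)] : F) = gb⁻¹ := rfl
  by_cases h : 0 ≤ k
  · obtain ⟨n, rfl⟩ := Int.eq_ofNat_of_zero_le h
    simp [h1]
  · obtain ⟨n, hn⟩ := Int.eq_ofNat_of_zero_le (show 0 ≤ -k by omega)
    obtain rfl : k = -n := by omega
    have : decide (0 ≤ (-n : ℤ)) = false := by simpa using h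
    rw [this, h2]
    simp

def ea (ε : Bool) : F := if ε then ga else ga⁻¹

theorem mk_EE_cons (x : Bool × ℤ) (r : List (Bool × ℤ)) :
    (FreeGroup.mk (EE (x :: r)) : F) = ea x.1 * gb ^ x.2 * FreeGroup.mk (EE r) := by
  obtain ⟨ε, k⟩ := x
  rw [EE, ← FreeGroup.mul_mk, seg, ← mk_bl]
  congr 1
  have : ea ε = FreeGroup.mk [(0, ε)] := by cases ε <;> rfl
  rw [this, FreeGroup.mul_mk]; rfl

def hh (i : ℤ) (ε : Bool) : F := if ε then 1 else gb ^ (-i)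

theorem sh_eval (i : ℤ) (r : List (Bool × ℤ)) (e : Bool × ℤ) :
    hh i (hd r e).1 * FreeGroup.mk (EE (sh i r e)) =
      (σ ^ i) (FreeGroup.mk (EE r)) * hh i e.1 := by
  induction r with
  | nil => simp [hd, sh, EE, ← FreeGroup.one_eq_mk]
  | cons x r ih =>
    rw [sh, mk_EE_cons, mk_EE_cons, map_mul, mul_assoc ((σ ^ i) _), ← ih]
    obtain ⟨ε, k⟩ := x
    simp only [hd_cons, map_mul, map_zpow, σz_gb]
    generalize (hd r e).1 = ε'
    cases ε' <;> cases ε <;> simp [hh, ea, cc, σz_ga] <;> group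

theorem sh_conj (i : ℤ) (r : List (Bool × ℤ)) :
    IsConj ((σ ^ i) (FreeGroup.mk (EE r))) (FreeGroup.mk (EE (sh i r (ce r)))) := by
  have h := sh_eval i r (ce r)
  have e : hd r (ce r) = ce r := hd_hd _ _
  rw [e] at h
  refine isConj_iff.2 ⟨(hh i (ce r).1)⁻¹, ?_⟩
  rw [inv_inv, mul_assoc, ← h]; group

theorem cyclen_sh (i : ℤ) {r : List (Bool × ℤ)} (h : ok r) :
    (cyclen ((σ ^ i) (FreeGroup.mk (EE r))) : ℤ) =
      psum (lft fun ε k ε' => 1 + |k + i * cc ε ε'|) r (ce r) := by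
  rw [cyclen_conj (sh_conj i r), cyclen_mk, length_EE, psum_sh _ _ _ _ _ (ce_sh i r _)]
  rw [← cpa_iff, ← ok_iff]
  exact ok_sh i h

/-! ### normal form -/

theorem parse (w : List Lt) (h : List.IsChain Rd w) : ∃ k r, w = bl k ++ EE r := by
  induction w with
  | nil => exact ⟨0, [], rfl⟩
  | cons x w ih =>
    obtain ⟨k, r, hw⟩ := ih h.tail
    obtain ⟨t, s⟩ := x
    fin_cases t
    · refine ⟨0, (s, k) :: r, ?_⟩
      rw [hw]; rfl
    · have key : k ≠ 0 → s = decide (0 ≤ k) := by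
        intro hk
        rcases bl_cases k with ⟨h1, _⟩ | ⟨n, h1, h2⟩
        · exact absurd h1 hk
        · rw [hw, h2, List.replicate_succ, List.cons_append, List.isChain_cons_cons] at h
          exact h.1 rfl
      refine ⟨if s then k + 1 else k - 1, r, ?_⟩
      rw [hw, ← List.cons_append]
      congr 1
      rcases s with _ | _
      · have h0 : k ≤ 0 := by
          by_contra hc
          have := key (by omega)
          simp at this
          omega
        have e1 : (k - 1).natAbs = k.natAbs + 1 := by omega
        have e2 : decide (0 ≤ k - 1) = false := by simp; omega
        simp only [bl, Bool.false_eq_true, if_false, e1, e2, List.replicate_succ]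
        congr 1
        by_cases hk : k = 0
        · simp [hk]
        · rw [← key hk]
      · have h0 : 0 ≤ k := by
          by_contra hc
          have := key (by omega)
          simp at this
          omega
        have e1 : (k + 1).natAbs = k.natAbs + 1 := by omega
        have e2 : decide (0 ≤ k + 1) = true := by simp; omega
        have e3 : decide (0 ≤ k) = true := by simpa using h0
        simp only [bl, if_true, e1, e2, e3, List.replicate_succ]
        rfl

theorem nf (w : List Lt) (h : cpa Rd w) : (∃ k, w = bl k) ∨
    ∃ s t r, w = s ++ t ∧ t ++ s = EE r ∧ ok r := by
  by_cases hx : ∃ ε, ((0 : Fin 2), ε) ∈ w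
  · right
    obtain ⟨ε, hε⟩ := hx
    obtain ⟨s, t, rfl⟩ := List.append_of_mem hε
    have h' : cpa Rd (((0, ε) :: t) ++ s) := (pall_rot Rd s _ _).1 h
    obtain ⟨k, r, hr⟩ := parse _ (((cpa_iff _).1 h').isReduced)
    have hk : bl k = [] := by
      rcases bl_cases k with ⟨_, h2⟩ | ⟨n, h1, h2⟩
      · exact h2
      · rw [h2, List.replicate_succ] at hr
        simp at hr
    rw [hk, List.nil_append] at hr
    refine ⟨s, _, r, rfl, hr, ?_⟩
    rw [ok_iff, ← hr]
    exact h'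
  · left
    obtain ⟨k, r, hr⟩ := parse _ (((cpa_iff _).1 h).isReduced)
    cases r with
    | nil => exact ⟨k, by simpa [EE] using hr⟩
    | cons x r =>
      exact absurd ⟨x.1, by rw [hr]; simp [EE, seg]⟩ hx

/-! ### one-step length formulas -/

def gg (s : Bool) (x y : Lt) : ℤ :=
  (if x.1 = 0 then 1 else 0) -
    (if (x = (0, true) ∧ y = (1, !s)) ∨ (x = (1, s) ∧ y = (0, false)) then 2 else 0)

def zz (s : Bool) : ℤ := if s then 1 else -1

def te (ε : Bool) : ℤ := if ε then 1 else 0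

theorem seg_gg (s ε : Bool) (k : ℤ) (ε' : Bool) (h : k = 0 → ε = ε') :
    psum (gg s) (seg (ε, k)) (0, ε') = |k + zz s * cc ε ε'| - |k| + (te ε' - te ε) := by
  rcases bl_cases k with ⟨h1, h2⟩ | ⟨n, h1, h2⟩
  · have := h h1
    subst this
    rw [seg, h2, h1]
    cases s <;> cases ε <;> simp [psum, hd_nil, gg, zz, cc, te]
  · rw [seg, h2, psum, psum_replicate, List.replicate_succ, hd_cons]
    rcases lt_or_ge k 0 with hk | hk
    · have e : decide (0 ≤ k) = false := by simpa using hk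
      rw [e, abs_of_neg hk]
      have h4 : |k + 1| = -(k + 1) := abs_of_nonpos (by omega)
      have h5 : |k - 1| = -(k - 1) := abs_of_neg (by omega)
      have h6 : |k + -1| = -(k - 1) := abs_of_neg (by omega)
      have h7 : |k| = -k := abs_of_neg hk
      cases s <;> cases ε <;> cases ε' <;> simp [gg, zz, cc, h4, h6, h7, te]
    · have e : decide (0 ≤ k) = true := by simpa using hk
      rw [e, abs_of_nonneg hk]
      have h4 : |k + 1| = (k + 1) := abs_of_nonneg (by omega)
      have h6 : |k + -1| = (k - 1) := abs_of_nonneg (by omega)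
      have h7 : |k| = k := abs_of_nonneg hk
      cases s <;> cases ε <;> cases ε' <;> simp [gg, zz, cc, h4, h6, h7, te]

theorem σz_bl (i : ℤ) (k : ℤ) : (σ ^ i) (FreeGroup.mk (bl k)) = FreeGroup.mk (bl k) := by
  rw [mk_bl, map_zpow, σz_gb]

theorem cps_bl (s : Bool) (k : ℤ) : cps (gg s) (bl k) = 0 := by
  rcases bl_cases k with ⟨h1, h2⟩ | ⟨n, h1, h2⟩
  · rw [h2]; rfl
  · rw [h2, cps, psum_replicate, List.replicate_succ, hd_cons]
    simp [gg]

theorem step_σ (s : Bool) (w : List Lt) (h : cpa Rd w) :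
    (cyclen ((σ ^ zz s) (FreeGroup.mk w)) : ℤ) = w.length + cps (gg s) w := by
  rcases nf w h with ⟨k, rfl⟩ | ⟨p, t, r, rfl, hr, hok⟩
  · rw [σz_bl, cps_bl, cyclen_mk ((cpa_iff _).1 h)]; simp
  · have e1 : cps (gg s) (p ++ t) = cps (gg s) (EE r) := by rw [← hr]; exact psum_rot _ _ _ _
    have e2 : (p ++ t).length = (EE r).length := by rw [← hr]; simp [add_comm]
    have e3 : IsConj ((σ ^ zz s) (FreeGroup.mk (p ++ t))) ((σ ^ zz s) (FreeGroup.mk (EE r))) := by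
      rw [← hr]
      exact (σ ^ zz s).toMonoidHom.map_isConj (mk_rot p t)
    rw [e1, e2, cyclen_conj e3, cyclen_sh _ hok, length_EE, cps_EE]
    have e4 : psum (fun x y : Bool × ℤ => te x.1 - te y.1) r (ce r) = 0 := by
      rw [psum_tele (fun x : Bool × ℤ => te x.1), ce, hd_hd]; ring
    rw [← add_zero (psum _ r (ce r) + _), ← e4, ← psum_add, ← psum_add]
    apply psum_congr
    refine pall_mono ?_ hok
    rintro ⟨ε, k⟩ ⟨ε', k'⟩ hk
    simp only [lft] at hk ⊢
    rw [seg_gg s ε k ε' hk]; ring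

/-! ### the swap -/

def θ : MulAut F := FreeGroup.freeGroupCongr (Equiv.swap 0 1)

def sw (x : Lt) : Lt := (Equiv.swap 0 1 x.1, x.2)

theorem θ_mk (w : List Lt) : θ (FreeGroup.mk w) = FreeGroup.mk (w.map sw) := rfl

theorem θ_ga : θ ga = gb := rfl
theorem θ_gb : θ gb = ga := rfl

theorem θθ (v : F) : θ (θ v) = v := by
  have : (θ * θ : MulAut F).toMonoidHom = MonoidHom.id F := by
    ext i
    fin_cases i <;> rfl
  exact DFunLike.congr_fun this v

theorem cpa_sw (w : List Lt) (h : cpa Rd w) : cpa Rd (w.map sw) := by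
  cases w with
  | nil => trivial
  | cons x w =>
    have h' : pall Rd (x :: w) x := h
    have : pall Rd ((x :: w).map sw) (sw x) := by
      rw [pall_map]
      refine pall_mono ?_ h'
      decide
    exact this

theorem cps_sw (g : Lt → Lt → ℤ) (w : List Lt) :
    cps g (w.map sw) = cps (fun x y => g (sw x) (sw y)) w := by
  cases w with
  | nil => rfl
  | cons x w => exact psum_map sw g (x :: w) x

theorem aut_conj (f : MulAut F) {v w : F} (h : IsConj v w) : IsConj (f v) (f w) :=
  f.toMonoidHom.map_isConj h

theorem cyclen_θ (v : F) : cyclen (θ v) = cyclen v := by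
  obtain ⟨w, hw, hv⟩ := exists_cr v
  rw [cyclen_conj (aut_conj θ hv), cyclen_conj hv, θ_mk, cyclen_mk ((cpa_iff _).1 hw),
    cyclen_mk ((cpa_iff _).1 (cpa_sw _ hw)), List.length_map]

theorem θσ (v : F) : θ (σ v) = τ (θ v) := by
  have : (θ * σ : MulAut F).toMonoidHom = (τ * θ : MulAut F).toMonoidHom := by
    ext i
    fin_cases i
    · change θ (σ ga) = τ (θ ga)
      rw [σ_ga, map_mul, θ_ga, θ_gb, τ_gb]
    · change θ (σ gb) = τ (θ gb)
      rw [σ_gb, θ_gb, τ_ga]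
  exact DFunLike.congr_fun this v

theorem θσi (v : F) : θ (σ⁻¹ v) = τ⁻¹ (θ v) := by
  apply τ.injective
  rw [← θσ, MulAut.apply_inv_self, MulAut.apply_inv_self]

theorem θτ (v : F) : θ (τ v) = σ (θ v) := by
  conv_lhs => rw [← θθ v, ← θσ, θθ]

theorem θτi (v : F) : θ (τ⁻¹ v) = σ⁻¹ (θ v) := by
  conv_lhs => rw [← θθ v, ← θσi, θθ]

theorem st_σ (w : List Lt) (h : cpa Rd w) :
    (cyclen (σ (FreeGroup.mk w)) : ℤ) = w.length + cps (gg true) w := by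
  simpa [zz] using step_σ true w h

theorem st_σi (w : List Lt) (h : cpa Rd w) :
    (cyclen (σ⁻¹ (FreeGroup.mk w)) : ℤ) = w.length + cps (gg false) w := by
  have := step_σ false w h
  rwa [show zz false = -1 from rfl, zpow_neg_one] at this

theorem st_τ (w : List Lt) (h : cpa Rd w) :
    (cyclen (τ (FreeGroup.mk w)) : ℤ) =
      w.length + cps (fun x y => gg true (sw x) (sw y)) w := by
  rw [← cyclen_θ, θτ, θ_mk, st_σ _ (cpa_sw _ h), cps_sw, List.length_map]

theorem st_τi (w : List Lt) (h : cpa Rd w) :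
    (cyclen (τ⁻¹ (FreeGroup.mk w)) : ℤ) =
      w.length + cps (fun x y => gg false (sw x) (sw y)) w := by
  rw [← cyclen_θ, θτi, θ_mk, st_σi _ (cpa_sw _ h), cps_sw, List.length_map]

/-! ### convexity -/

theorem cps_tele {g1 g2 h : Lt → Lt → ℤ} (t : Lt → ℤ) {w : List Lt} (hw : cpa Rd w)
    (H : ∀ x y, Rd x y → g1 x y + g2 x y + (t x - t y) = h x y) :
    cps g1 w + cps g2 w = cps h w := by
  have e1 : cps h w = cps (fun x y => g1 x y + g2 x y + (t x - t y)) w :=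
    psum_congr (pall_mono (fun x y hxy => (H x y hxy).symm) hw)
  rw [e1]
  unfold cps
  rw [psum_add (fun x y => g1 x y + g2 x y), psum_add, psum_tele, hd_hd]
  ring

def hAA (x y : Lt) : ℤ := if x.1 = 0 ∧ y.1 = 0 then 2 else 0
def hS (x y : Lt) : ℤ := if x.1 = y.1 then 1 else 0

theorem sum_σσ {w : List Lt} (hw : cpa Rd w) : cps (gg true) w + cps (gg false) w = cps hAA w :=
  cps_tele (fun x => if x = (0, false) then -2 else 0) hw (by decide)

theorem sum_στ {w : List Lt} (hw : cpa Rd w) :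
    cps (fun x y => gg true (sw x) (sw y)) w + cps (gg false) w = cps hS w :=
  cps_tele (fun x => if x = (0, false) then -1 else if x = (0, true) then 1 else 0) hw (by decide)

theorem sum_τσ {w : List Lt} (hw : cpa Rd w) :
    cps (gg true) w + cps (fun x y => gg false (sw x) (sw y)) w = cps hS w :=
  cps_tele (fun x => if x = (1, false) then -1 else if x = (1, true) then 1 else 0) hw (by decide)

theorem psum_zero (w : List Lt) (e : Lt) : psum (fun _ _ => 0 : Lt → Lt → ℤ) w e = 0 := by
  induction w with
  | nil => rfl
  | cons x w ih => simp [psum, ih]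

theorem cps_nonneg {h : Lt → Lt → ℤ} (H : ∀ x y, 0 ≤ h x y) (w : List Lt) : 0 ≤ cps h w := by
  rw [← psum_zero w (hd w (0, true))]
  exact psum_le (pall_of_forall H _ _)

theorem cps_zero {h : Lt → Lt → ℤ} (H : ∀ x y, 0 ≤ h x y) {w : List Lt} (h0 : cps h w = 0) :
    cpa (fun x y => h x y = 0) w := by
  refine pall_mono (fun x y hxy => hxy.symm)
    (psum_eq (g := fun _ _ => 0) (pall_of_forall H _ _) ?_)
  rw [psum_zero]; exact h0.le

/-- `g true = σ`, `g false = τ`. -/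
def gen (s : Bool) : MulAut F := if s then σ else τ

theorem θgen (s : Bool) (v : F) : θ (gen s v) = gen (!s) (θ v) := by
  cases s
  · exact θτ v
  · exact θσ v

theorem θgeni (s : Bool) (v : F) : θ ((gen s)⁻¹ v) = (gen (!s))⁻¹ (θ v) := by
  cases s
  · exact θτi v
  · exact θσi v

theorem cvx_σ (s : Bool) (v : F) :
    2 * cyclen v ≤ cyclen (gen s v) + cyclen (σ⁻¹ v) := by
  obtain ⟨w, hw, hv⟩ := exists_cr v
  rw [cyclen_conj (aut_conj _ hv), cyclen_conj (aut_conj σ⁻¹ hv), cyclen_conj hv,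
    cyclen_mk ((cpa_iff _).1 hw)]
  have h1 := st_σi w hw
  cases s
  · have h2 := st_τ w hw
    have h3 := sum_στ hw
    have h4 := cps_nonneg (h := hS) (by decide) w
    simp only [gen, Bool.false_eq_true, if_false]
    omega
  · have h2 := st_σ w hw
    have h3 := sum_σσ hw
    have h4 := cps_nonneg (h := hAA) (by decide) w
    simp only [gen, if_true]
    omega

theorem cvx (s s' : Bool) (v : F) :
    2 * cyclen v ≤ cyclen (gen s v) + cyclen ((gen s')⁻¹ v) := by
  cases s'
  · have := cvx_σ (!s) (θ v)
    rwa [← θgen, ← θτi, cyclen_θ, cyclen_θ, cyclen_θ] at this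
  · exact cvx_σ s v

/-! ### fixing lemmas -/

theorem psum_bound {α : Type} {g : α → α → ℤ} (H : ∀ x y, 0 ≤ g x y) (B : ℤ) {s : List α} {e : α}
    (h : psum g s e ≤ B) : pall (fun x y => g x y ≤ B) s e ∧ 0 ≤ psum g s e := by
  induction s with
  | nil => exact ⟨trivial, le_refl _⟩
  | cons x s ih =>
    simp only [psum] at h
    have h0 := H x (hd s e)
    have h1 := ih (by linarith)
    refine ⟨⟨by linarith [h1.2], h1.1⟩, ?_⟩
    simp only [psum]
    linarith [h1.2]

theorem sh_fix (i : ℤ) {r : List (Bool × ℤ)} {e : Bool × ℤ}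
    (h : pall (lft fun ε _ ε' => cc ε ε' = 0) r e) : sh i r e = r := by
  induction r with
  | nil => rfl
  | cons x r ih =>
    have h1 : cc x.1 (hd r e).1 = 0 := h.1
    rw [sh, h1, ih h.2]
    simp

theorem σ_fix {r : List (Bool × ℤ)} (h : pall (lft fun ε _ ε' => cc ε ε' = 0) r (ce r)) :
    IsConj (σ (FreeGroup.mk (EE r))) (FreeGroup.mk (EE r)) := by
  have := sh_conj 1 r
  rwa [sh_fix 1 h, zpow_one] at this

/-- Every element is conjugate to a power of `b` or to a cyclically reduced syllable list. -/
theorem nf' (v : F) : (∃ k, IsConj v (FreeGroup.mk (bl k))) ∨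
    ∃ r, ok r ∧ IsConj v (FreeGroup.mk (EE r)) := by
  obtain ⟨w, hw, hv⟩ := exists_cr v
  rcases nf w hw with ⟨k, rfl⟩ | ⟨s, t, r, rfl, hr, hok⟩
  · exact Or.inl ⟨k, hv⟩
  · exact Or.inr ⟨r, hok, by rw [← hr]; exact hv.trans (mk_rot s t)⟩

theorem fix_transfer {f : MulAut F} {v w : F} (h : IsConj v w) (hf : IsConj (f w) w) :
    IsConj (f v) v := (aut_conj f h).trans (hf.trans h.symm)

theorem fix_bl (k : ℤ) : IsConj (σ (FreeGroup.mk (bl k))) (FreeGroup.mk (bl k)) := by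
  have := σz_bl 1 k
  rw [zpow_one] at this
  rw [this]

theorem lemA_σ (v : F) (i : ℕ) (hi : 2 * cyclen v < i) (h : cyclen ((σ ^ i) v) = cyclen v) :
    IsConj (σ v) v := by
  rcases nf' v with ⟨k, hk⟩ | ⟨r, hok, hr⟩
  · exact fix_transfer hk (fix_bl k)
  · refine fix_transfer hr (σ_fix ?_)
    rw [cyclen_conj hr] at hi
    rw [cyclen_conj hr, cyclen_conj (aut_conj (σ ^ i) hr)] at h
    have e1 := cyclen_sh i hok
    have e0 : (cyclen (FreeGroup.mk (EE r)) : ℤ) = psum (lft fun _ k _ => 1 + |k|) r (ce r) := by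
      rw [cyclen_mk ((cpa_iff _).1 ((ok_iff r).1 hok)), length_EE]
    rw [zpow_natCast, h] at e1
    have e2 : psum (lft fun ε _ ε' => (i : ℤ) * |cc ε ε'|) r (ce r) ≤
        2 * cyclen (FreeGroup.mk (EE r)) := by
      rw [two_mul]
      nth_rw 1 [e1]
      rw [e0, ← psum_add]
      apply psum_le
      refine pall_of_forall ?_ _ _
      rintro ⟨ε, k⟩ ⟨ε', k'⟩
      simp only [lft]
      have a1 := abs_sub (k + i * cc ε ε') k
      rw [add_sub_cancel_left, abs_mul, Nat.abs_cast] at a1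
      linarith
    have e3 := (psum_bound (by
      rintro ⟨ε, k⟩ ⟨ε', k'⟩
      simp only [lft]
      positivity) _ e2).1
    refine pall_mono ?_ e3
    rintro ⟨ε, k⟩ ⟨ε', k'⟩ hx
    simp only [lft] at hx ⊢
    by_contra hc
    have := Int.one_le_abs hc
    have hi' : (2 * cyclen (FreeGroup.mk (EE r)) : ℤ) < i := by exact_mod_cast hi
    nlinarith

theorem noaa_of_flat (s : Bool) {w : List Lt} (hw : cpa Rd w)
    (h1 : cyclen (σ⁻¹ (FreeGroup.mk w)) = w.length)
    (h2 : cyclen (gen s (FreeGroup.mk w)) = w.length) :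
    cpa (fun x y => ¬ (x.1 = 0 ∧ y.1 = 0)) w := by
  have k1 := st_σi w hw
  cases s
  · have k2 := st_τ w hw
    have k3 := sum_στ hw
    simp only [gen, Bool.false_eq_true, if_false] at h2
    refine pall_mono ?_ (cps_zero (h := hS) (by decide) (w := w) (by omega))
    decide
  · have k2 := st_σ w hw
    have k3 := sum_σσ hw
    simp only [gen, if_true] at h2
    refine pall_mono ?_ (cps_zero (h := hAA) (by decide) (w := w) (by omega))
    decide

theorem nosame_of_flat {w : List Lt} (hw : cpa Rd w)
    (h1 : cyclen (τ⁻¹ (FreeGroup.mk w)) = w.length)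
    (h2 : cyclen (σ (FreeGroup.mk w)) = w.length) :
    cpa (fun x y => x.1 ≠ y.1) w := by
  have k1 := st_τi w hw
  have k2 := st_σ w hw
  have k3 := sum_τσ hw
  refine pall_mono ?_ (cps_zero (h := hS) (by decide) (w := w) (by omega))
  decide

theorem seg_nosame (ε : Bool) (k : ℤ) (ε' : Bool)
    (h : pall (fun x y : Lt => x.1 ≠ y.1) (seg (ε, k)) (0, ε')) : |k| = 1 := by
  rcases bl_cases k with ⟨h1, h2⟩ | ⟨n, h1, h2⟩
  · rw [seg, h2] at h
    exact absurd rfl h.1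
  · rw [seg, h2, pall, pall_replicate] at h
    rcases h.2.1 with h3 | h3
    · rw [Int.abs_eq_natAbs, h1, h3]; rfl
    · exact absurd rfl h3

theorem seg_noaa (ε : Bool) (k : ℤ) (ε' : Bool)
    (h : pall (fun x y : Lt => ¬ (x.1 = 0 ∧ y.1 = 0)) (seg (ε, k)) (0, ε')) : k ≠ 0 := by
  rcases bl_cases k with ⟨h1, h2⟩ | ⟨n, h1, h2⟩
  · rw [seg, h2] at h
    exact absurd ⟨rfl, rfl⟩ h.1
  · omega

theorem lemB_σ (s : Bool) (v : F) (h1 : cyclen (τ⁻¹ v) = cyclen v) (h2 : cyclen (σ v) = cyclen v)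
    (h3 : cyclen (gen s (σ v)) = cyclen (σ v)) : IsConj (σ v) v := by
  rcases nf' v with ⟨k, hk⟩ | ⟨r, hok, hr⟩
  · exact fix_transfer hk (fix_bl k)
  · refine fix_transfer hr (σ_fix ?_)
    have hσ : IsConj (σ v) (FreeGroup.mk (EE (sh 1 r (ce r)))) := by
      have := sh_conj 1 r
      rw [zpow_one] at this
      exact (aut_conj σ hr).trans this
    have hcr := (ok_iff r).1 hok
    have hcr' := (ok_iff _).1 (ok_sh 1 hok)
    have l0 : cyclen v = (EE r).length := by rw [cyclen_conj hr, cyclen_mk ((cpa_iff _).1 hcr)]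
    have l1 : cyclen (σ v) = (EE (sh 1 r (ce r))).length := by
      rw [cyclen_conj hσ, cyclen_mk ((cpa_iff _).1 hcr')]
    have n0 := nosame_of_flat hcr (by rw [← l0, ← h1, cyclen_conj (aut_conj _ hr)])
      (by rw [← l0, ← h2, cyclen_conj (aut_conj _ hr)])
    have n1 := noaa_of_flat s hcr' (by
        rw [← l1, h2, ← cyclen_conj (aut_conj _ hσ), MulAut.inv_apply_self])
      (by rw [← l1, ← h3, cyclen_conj (aut_conj _ hσ)])
    rw [cpa_EE] at n0 n1
    rw [pall_sh (fun ε k ε' => pall _ (seg (ε, k)) (0, ε')) _ _ _ _ (ce_sh 1 r _)] at n1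
    have n2 : pall (fun x y : Bool × ℤ => |x.2| = 1 ∧ x.2 + 1 * cc x.1 y.1 ≠ 0) r (ce r) := by
      refine pall_mono ?_ (pall_and n0 n1)
      rintro ⟨ε, k⟩ ⟨ε', k'⟩ ⟨ha, hb⟩
      exact ⟨seg_nosame _ _ _ ha, seg_noaa _ _ _ hb⟩
    have c0 := length_EE r
    have c1 := length_EE (sh 1 r (ce r))
    rw [psum_sh _ _ _ _ _ (ce_sh 1 r _)] at c1
    have key : ∀ (ε : Bool) (k : ℤ) (ε' : Bool), |k| = 1 → k + 1 * cc ε ε' ≠ 0 →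
        |k + 1 * cc ε ε'| = 1 + |cc ε ε'| := by
      intro ε k ε' hk hn
      rcases (abs_eq (by norm_num : (0 : ℤ) ≤ 1)).1 hk with rfl | rfl <;> revert hn <;>
        cases ε <;> cases ε' <;> simp [cc]
    have n3 : pall (fun x y => lft (fun _ k _ => 1 + |k|) x y ≤
        lft (fun ε k ε' => 1 + |k + 1 * cc ε ε'|) x y) r (ce r) := by
      refine pall_mono ?_ n2
      rintro ⟨ε, k⟩ ⟨ε', k'⟩ ⟨ha, hb⟩
      simp only [lft] at ha hb ⊢
      rw [key ε k ε' ha hb, ha]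
      have := abs_nonneg (cc ε ε')
      linarith
    have n4 := psum_eq n3 (by rw [← c0, ← c1]; omega)
    refine pall_mono ?_ (pall_and n2 n4)
    rintro ⟨ε, k⟩ ⟨ε', k'⟩ ⟨⟨ha, hb⟩, hc⟩
    simp only [lft] at ha hb hc ⊢
    rw [key ε k ε' ha hb, ha] at hc
    exact abs_eq_zero.1 (by linarith)

theorem θ_conj {v w : F} (h : IsConj (θ v) (θ w)) : IsConj v w := by
  have := aut_conj θ h
  rwa [θθ, θθ] at this

theorem θgen_pow (s : Bool) (i : ℕ) (v : F) : θ ((gen s ^ i) v) = (gen (!s) ^ i) (θ v) := by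
  induction i generalizing v with
  | zero => rfl
  | succ n ih => rw [pow_succ, MulAut.mul_apply, ih, pow_succ, MulAut.mul_apply, θgen]

theorem lemA (s : Bool) (v : F) (i : ℕ) (hi : 2 * cyclen v < i)
    (h : cyclen ((gen s ^ i) v) = cyclen v) : IsConj (gen s v) v := by
  cases s
  · apply θ_conj
    rw [θgen]
    rw [← cyclen_θ v] at hi h
    rw [← cyclen_θ, θgen_pow] at h
    exact lemA_σ _ i hi h
  · exact lemA_σ v i hi h

theorem lemB (s s' : Bool) (v : F) (h1 : cyclen ((gen (!s))⁻¹ v) = cyclen v)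
    (h2 : cyclen (gen s v) = cyclen v)
    (h3 : cyclen (gen s' (gen s v)) = cyclen (gen s v)) : IsConj (gen s v) v := by
  cases s
  · apply θ_conj
    rw [θgen]
    rw [← cyclen_θ ((gen _)⁻¹ v), ← cyclen_θ v, θgeni] at h1
    rw [← cyclen_θ (gen _ v), ← cyclen_θ v, θgen] at h2
    rw [← cyclen_θ (gen s' _), ← cyclen_θ (gen _ v), θgen, θgen] at h3
    exact lemB_σ (!s') _ h1 h2 h3
  · exact lemB_σ s' v h1 h2 h3

/-! ### convex sequences -/

theorem convex_flat (l : ℕ → ℕ) (N L : ℕ) (hc : ∀ t, 2 * l (t + 1) ≤ l (t + 2) + l t)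
    (h0 : l 0 ≤ L) (hN : l N ≤ L) :
    ∀ t, L ≤ t → t + L < N → l (t + 1) = l t ∧ l t ≤ L := by
  have mono : ∀ t d, (l (t + 1) : ℤ) - l t ≤ l (t + d + 1) - l (t + d) := by
    intro t d
    induction d with
    | zero => simp
    | succ d ih =>
      have := hc (t + d)
      have e : t + (d + 1) = t + d + 1 := by ring
      rw [e]
      have e' : t + d + 1 + 1 = t + d + 2 := by ring
      rw [e']
      omega
  have up : ∀ t, t + L < N → l (t + 1) ≤ l t := by
    intro t ht
    by_contra! hlt
    have : ∀ d, l t + d ≤ l (t + d) := by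
      intro d
      induction d with
      | zero => simp
      | succ d ih =>
        have := mono t d
        have e : t + (d + 1) = t + d + 1 := by ring
        rw [e]
        omega
    have h := this (N - t)
    rw [show t + (N - t) = N by omega] at h
    omega
  have noninc : ∀ t, t + L ≤ N → l t ≤ l 0 := by
    intro t
    induction t with
    | zero => intro _; exact le_refl _
    | succ t ih => intro ht; exact (up t (by omega)).trans (ih (by omega))
  intro t h1 h2
  refine ⟨?_, (noninc t (by omega)).trans h0⟩
  refine le_antisymm (up t h2) ?_
  by_contra! hlt
  have : ∀ d, d ≤ t + 1 → l d + d ≤ l 0 := by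
    intro d
    induction d with
    | zero => intro _; simp
    | succ d ih =>
      intro hd
      have a := ih (by omega)
      have b := mono d (t - d)
      rw [show d + (t - d) = t by omega] at b
      omega
  have := this (t + 1) (le_refl _)
  omega

/-! ### chains as lists of letters -/

/-- the product, first letter of the list applied first -/
def PP (l : List Bool) : MulAut F := (l.map gen).reverse.prod

theorem PP_append (l l' : List Bool) : PP (l ++ l') = PP l' * PP l := by
  simp [PP]

theorem PP_cons (x : Bool) (l : List Bool) : PP (x :: l) = PP l * gen x := by
  simp [PP]

theorem PP_replicate (n : ℕ) (s : Bool) : PP (List.replicate n s) = gen s ^ n := by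
  simp [PP]

theorem chain_to_list (c : List (ℕ × ℕ)) : ∃ l, l.length = chainLen c ∧ PP l = chainC1 c := by
  induction c with
  | nil => exact ⟨[], rfl, rfl⟩
  | cons p c ih =>
    obtain ⟨l, h1, h2⟩ := ih
    refine ⟨l ++ (List.replicate p.1 true ++ List.replicate p.2 false), ?_, ?_⟩
    · simp only [List.length_append, List.length_replicate, h1]
      simp [chainLen, sigmaCount, tauCount]; ring
    · rw [PP_append, PP_append, PP_replicate, PP_replicate, h2]
      simp [chainC1, gen]

theorem list_to_chain (l : List Bool) : ∃ c, (l ≠ [] → c ≠ []) ∧ chainLen c = l.length ∧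
    chainC1 c = PP l := by
  refine ⟨(l.map fun s => if s then (1, 0) else (0, 1)).reverse, ?_, ?_, ?_⟩
  · intro h; simpa using h
  · induction l with
    | nil => rfl
    | cons x l ih =>
      simp only [chainLen, sigmaCount, tauCount, List.map_reverse, List.sum_reverse] at ih ⊢
      cases x <;> simp at ih ⊢ <;> omega
  · induction l with
    | nil => rfl
    | cons x l ih =>
      rw [PP_cons, ← ih]
      cases x <;> simp [chainC1, gen]

/-- partial products -/
def Ph (f : ℕ → Bool) : ℕ → MulAut F
  | 0 => 1
  | t + 1 => gen (f t) * Ph f t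

theorem Ph_take (l : List Bool) (t : ℕ) (ht : t ≤ l.length) :
    PP (l.take t) = Ph (fun n => l.getD n true) t := by
  induction t with
  | zero => rfl
  | succ t ih =>
    rw [List.take_succ_eq_append_getElem (by omega), PP_append, ih (by omega), Ph, PP_cons]
    have : l.getD t true = l[t] := by
      rw [List.getD_eq_getElem _ _ (by omega)]
    rw [this]
    rfl

theorem Ph_const (f : ℕ → Bool) (s : Bool) (t n : ℕ) (h : ∀ j, j < n → f (t + j) = s) :
    Ph f (t + n) = gen s ^ n * Ph f t := by
  induction n with
  | zero => simp
  | succ n ih =>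
    rw [← add_assoc, Ph, ih (fun j hj => h j (by omega)), h n (by omega), pow_succ', mul_assoc]

theorem Ph_convex (f : ℕ → Bool) (v : F) (t : ℕ) :
    2 * cyclen (Ph f (t + 1) v) ≤ cyclen (Ph f (t + 2) v) + cyclen (Ph f t v) := by
  have h := cvx (f (t + 1)) (f t) (Ph f (t + 1) v)
  have e1 : (gen (f t))⁻¹ (Ph f (t + 1) v) = Ph f t v := by
    rw [Ph, MulAut.mul_apply, MulAut.inv_apply_self]
  rw [e1] at h
  exact h

/-- Theorem 5.3:  a chain of type (C1) of length `≥ 4L+5` fixing the cyclic lengths of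
`u₁, …, u_k` can be replaced by a strictly shorter one acting the same up to conjugacy. -/
theorem stmt14 (k : ℕ) (hk : 0 < k) (u : Fin k → F) (L : ℕ)
    (hL : L = Finset.univ.sup fun i => len (u i))
    (c : List (ℕ × ℕ)) (hne : c ≠ []) (hlen : 4 * L + 5 ≤ chainLen c)
    (hfix : ∀ i, cyclen (chainC1 c (u i)) = cyclen (u i)) :
    ∃ c' : List (ℕ × ℕ), c' ≠ [] ∧ chainLen c' < chainLen c ∧
      ∀ i, IsConj (chainC1 c' (u i)) (chainC1 c (u i)) := by
  obtain ⟨l, hl, hP⟩ := chain_to_list c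
  set f : ℕ → Bool := fun n => l.getD n true with hf
  have hPN : Ph f l.length = chainC1 c := by
    rw [← Ph_take l _ le_rfl, List.take_length, hP]
  have hu : ∀ i, cyclen (u i) ≤ L := by
    intro i
    have h1 : len (u i) ≤ L := by
      rw [hL]; exact Finset.le_sup (f := fun i => len (u i)) (Finset.mem_univ i)
    have h2 := cyclen_le (u i) 1
    simp only [one_mul, inv_one, mul_one] at h2
    omega
  have flat : ∀ i t, L ≤ t → t + L < l.length →
      cyclen (Ph f (t + 1) (u i)) = cyclen (Ph f t (u i)) ∧ cyclen (Ph f t (u i)) ≤ L := by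
    intro i
    refine convex_flat (fun t => cyclen (Ph f t (u i))) l.length L (Ph_convex f (u i)) (hu i) ?_
    change cyclen (Ph f l.length (u i)) ≤ L
    rw [hPN, hfix]
    exact hu i
  -- it suffices to find a step which fixes all the conjugacy classes
  suffices H : ∃ t, t < l.length ∧ ∀ i, IsConj (gen (f t) (Ph f t (u i))) (Ph f t (u i)) by
    obtain ⟨t, ht, H⟩ := H
    obtain ⟨c', h1, h2, h3⟩ := list_to_chain (l.take t ++ l.drop (t + 1))
    have hlen' : (l.take t ++ l.drop (t + 1)).length + 1 = l.length := by
      simp only [List.length_append, List.length_take, List.length_drop]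
      omega
    refine ⟨c', h1 ?_, by omega, ?_⟩
    · intro h0
      rw [h0] at hlen'
      simp at hlen'
      omega
    · intro i
      have e1 : PP l = PP (l.drop (t + 1)) * (gen (f t) * Ph f t) := by
        conv_lhs => rw [← List.take_append_drop (t + 1) l]
        rw [PP_append, Ph_take l (t + 1) (by omega)]
        rfl
      rw [h3, ← hP, e1, PP_append, Ph_take l t (by omega)]
      exact aut_conj (PP (l.drop (t + 1))) (H i).symm
  by_cases hcase : ∀ j, j < 2 * L + 1 → f (L + j) = f L
  · refine ⟨L, by omega, fun i => ?_⟩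
    refine lemA (f L) _ (2 * L + 1) ?_ ?_
    · have := (flat i L le_rfl (by omega)).2
      omega
    · rw [← MulAut.mul_apply, ← Ph_const f (f L) L (2 * L + 1) hcase]
      have : ∀ n, n ≤ 2 * L + 1 → cyclen (Ph f (L + n) (u i)) = cyclen (Ph f L (u i)) := by
        intro n
        induction n with
        | zero => intro _; rfl
        | succ n ih =>
          intro hn
          rw [← ih (by omega)]
          exact (flat i (L + n) (by omega) (by omega)).1
      exact this _ le_rfl
  · have hsw : ∃ j, j < 2 * L + 1 ∧ f (L + j + 1) = !(f (L + j)) := by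
      by_contra! hno
      apply hcase
      intro j
      induction j with
      | zero => intro _; rfl
      | succ j ih =>
        intro hj
        rw [← ih (by omega)]
        have := hno j (by omega)
        rw [← add_assoc]
        revert this
        cases f (L + j + 1) <;> cases f (L + j) <;> simp
    obtain ⟨j, hj, hs⟩ := hsw
    refine ⟨L + j + 1, by omega, fun i => ?_⟩
    have a1 := (flat i (L + j) (by omega) (by omega)).1
    have a2 := (flat i (L + j + 1) (by omega) (by omega)).1
    have a3 := (flat i (L + j + 1 + 1) (by omega) (by omega)).1
    refine lemB _ (f (L + j + 1 + 1)) _ ?_ a2 a3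
    rw [a1, hs, Bool.not_not]
    congr 1
    rw [Ph, MulAut.mul_apply, MulAut.inv_apply_self]
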